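/- Let n ≥ 2 be an integer. For every compact interval K ⊂ (0, ∞) and every ε > 0 there exists R₀ > 0 such that for every R ≥ R₀ and every t ∈ (0, T_R) for which x_R(τ) > y_R(τ) for all τ ∈ (0, t] and θ_R(τ) > −5π/4 for all τ ∈ [0, t], the following holds: if (x_R(t) + y_R(t))/√2 ∈ K, then (x_R(t) − y_R(t))/√2 < ε and |θ_R(t) + 3π/4| < ε. (As R → ∞, the curves converge in C¹ to the diagonal {x = y} on compact subsets away from the origin.) -/

import Mathlib

/-- The shooting solution of the self-shrinker profile system (with `m = n`) on `[0, T)`: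
`x' = cos θ`, `y' = sin θ`, `θ' = (x/2 − (n−1)/x)·sin θ + ((n−1)/y − y/2)·cos θ`,
with `x, y > 0`, and initial conditions `x 0 = y 0 = R/√2`, `θ 0 = −π/4`. -/
def ShootingSol (n : ℕ) (R T : ℝ) (x y θ : ℝ → ℝ) : Prop :=
  0 < T ∧ x 0 = R / Real.sqrt 2 ∧ y 0 = R / Real.sqrt 2 ∧ θ 0 = -(Real.pi / 4) ∧
  ∀ t ∈ Set.Ico 0 T, 0 < x t ∧ 0 < y t ∧
    HasDerivAt x (Real.cos (θ t)) t ∧ HasDerivAt y (Real.sin (θ t)) t ∧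
    HasDerivAt θ ((x t / 2 - ((n : ℝ) - 1) / x t) * Real.sin (θ t)
      + (((n : ℝ) - 1) / y t - y t / 2) * Real.cos (θ t)) t

/-!
Write `m = n - 1` and rotate the plane by `π/4`: let `r`, `s` be the coordinates along and below
the diagonal, and let `b` be the angle between the tangent and the inward direction of the diagonal.
Then `r' = -cos b`, `s' = sin b` and `b' = -(g sin b + h s cos b)`, which is a damped oscillator in
`s` whose damping `g ≈ r/2 - 2m/r` is of order `R` near the starting point. It begins at `s = 0`,
`b = π/2`, and as long as `b ≥ 0` the quantity `b + (R/8) s` decreases, so `s ≤ 4π/R`. Moreover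
`sin b / s` is at most `1` at time `1` and decreases at a definite rate afterwards, so `b` vanishes
by time `5`, while `r` is still close to `R`.

From then on `b ≤ 0`, hence `s` decreases and stays below `4π/R`. As a function of `-r`, the
quantity `-sin b` has derivative at most `-g (-sin b) + O(1/R)`. The damping helps for large `r`
and is bounded below for `r ≥ k₁`, so a barrier of the form `(1 + exp (ρ (ρ - r))) / R` shows that
`-sin b = O(1/R)`.
-/

open Real Set Filter

section Calculus

variable {f f' : ℝ → ℝ} {a c : ℝ} {D : Set ℝ}

theorem antitoneOn_of_hasDerivAt_nonpos (hD : Convex ℝ D)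
    (hf : ∀ u ∈ D, HasDerivAt f (f' u) u) (hf' : ∀ u ∈ D, f' u ≤ 0) : AntitoneOn f D :=
  antitoneOn_of_hasDerivWithinAt_nonpos hD (HasDerivAt.continuousOn hf)
    (fun u hu ↦ (hf u (interior_subset hu)).hasDerivWithinAt)
    (fun u hu ↦ hf' u (interior_subset hu))

theorem monotoneOn_of_hasDerivAt_nonneg (hD : Convex ℝ D)
    (hf : ∀ u ∈ D, HasDerivAt f (f' u) u) (hf' : ∀ u ∈ D, 0 ≤ f' u) : MonotoneOn f D :=
  monotoneOn_of_hasDerivWithinAt_nonneg hD (HasDerivAt.continuousOn hf)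
    (fun u hu ↦ (hf u (interior_subset hu)).hasDerivWithinAt)
    (fun u hu ↦ hf' u (interior_subset hu))

theorem nonpos_of_hasDerivAt_neg_of_eq_zero (hf : ∀ u ∈ Icc a c, HasDerivAt f (f' u) u)
    (ha : f a ≤ 0) (hf' : ∀ u ∈ Icc a c, f u = 0 → f' u < 0) : ∀ u ∈ Icc a c, f u ≤ 0 :=
  fun _ hu ↦ image_le_of_deriv_right_lt_deriv_boundary (B := fun _ ↦ 0) (B' := fun _ ↦ 0)
    (HasDerivAt.continuousOn hf)
    (fun v hv ↦ (hf v (Ico_subset_Icc_self hv)).hasDerivWithinAt) ha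
    (fun v ↦ hasDerivAt_const v 0) (fun v hv ↦ hf' v (Ico_subset_Icc_self hv)) hu

theorem exists_first_zero (hac : a ≤ c) (hf : ContinuousOn f (Icc a c)) (ha : 0 ≤ f a)
    (hc : f c ≤ 0) : ∃ z ∈ Icc a c, f z = 0 ∧ ∀ u ∈ Icc a z, 0 ≤ f u := by
  have hcompact : IsCompact (Icc a c ∩ f ⁻¹' Iic 0) :=
    isCompact_Icc.of_isClosed_subset (hf.preimage_isClosed_of_isClosed isClosed_Icc isClosed_Iic)
      inter_subset_left
  obtain ⟨z, ⟨hz, hfz⟩, hleast⟩ := hcompact.exists_isLeast ⟨c, right_mem_Icc.2 hac, hc⟩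
  obtain ⟨w, hw, hfw⟩ :=
    intermediate_value_Icc' hz.1 (hf.mono (Icc_subset_Icc_right hz.2)) ⟨hfz, ha⟩
  obtain rfl : w = z := hw.2.antisymm (hleast ⟨⟨hw.1, hw.2.trans hz.2⟩, hfw.le⟩)
  refine ⟨w, hz, hfw, fun u hu ↦ ?_⟩
  by_contra! hneg
  have huw : u = w := hu.2.antisymm (hleast ⟨⟨hu.1, hu.2.trans hz.2⟩, hneg.le⟩)
  exact hneg.ne (huw ▸ hfw)

end Calculus

section Coefficients

/-- The coefficient of `sin b` in the rotated profile system; linearized at the diagonal, that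
system is the oscillator `s'' + damping * s' + stiffness * s = 0`. -/
noncomputable def damping (m r s : ℝ) : ℝ := r / 2 - 2 * m * r / (r ^ 2 - s ^ 2)

/-- The coefficient of `s * cos b` in the rotated profile system, see `damping`. -/
noncomputable def stiffness (m r s : ℝ) : ℝ := 1 / 2 + 2 * m / (r ^ 2 - s ^ 2)

variable {m r s : ℝ}

theorem half_le_stiffness (hm : 0 ≤ m) (h : |s| < r) : 1 / 2 ≤ stiffness m r s := by
  have hD : 0 < r ^ 2 - s ^ 2 := sub_pos.2 (sq_lt_sq.2 (h.trans_le (le_abs_self r)))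
  have : 0 ≤ 2 * m / (r ^ 2 - s ^ 2) := by positivity
  unfold stiffness
  linarith

theorem stiffness_le (hm : 0 ≤ m) (hr : 0 < r) (h : 2 * s ^ 2 ≤ r ^ 2) :
    stiffness m r s ≤ 1 / 2 + 4 * m / r ^ 2 := by
  have hr2 : 0 < r ^ 2 := by positivity
  have : 2 * m / (r ^ 2 - s ^ 2) ≤ 4 * m / r ^ 2 := by
    rw [div_le_div_iff₀ (by linarith) hr2]
    nlinarith
  unfold stiffness
  linarith

theorem le_damping (hm : 0 ≤ m) (hr : 0 < r) (h : 2 * s ^ 2 ≤ r ^ 2) :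
    r / 2 - 4 * m / r ≤ damping m r s := by
  have hr2 : 0 < r ^ 2 := by positivity
  have : 2 * m * r / (r ^ 2 - s ^ 2) ≤ 4 * m / r := by
    rw [div_le_div_iff₀ (by linarith) hr]
    nlinarith
  unfold damping
  linarith

end Coefficients

section Barrier

/-- The upper barrier, as a function of `r`, for `-sin b` divided by the size of `s` and by a bound
for the stiffness, when the damping is at least `r / 2 - Λ`. The exponential switches on at
`r = 2 * Λ + 2`, below which the damping may be less than `1`. -/
noncomputable def barrier (Λ u : ℝ) : ℝ := 1 + exp ((2 * Λ + 2) * (2 * Λ + 2 - u))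

/-- The factor by which the final bound on `|sin b|` exceeds the bound on `s`, for curves that stay
at distance `r ≥ k`: there the stiffness is at most `1 / 2 + 4 * m / k ^ 2` and the damping at least
`r / 2 - 4 * m / k`. -/
noncomputable def angleConst (m k : ℝ) : ℝ := (1 / 2 + 4 * m / k ^ 2) * barrier (4 * m / k) 0

variable {Λ g u : ℝ}

theorem barrier_pos : 0 < barrier Λ u := by
  unfold barrier
  positivity

theorem hasDerivAt_barrier :
    HasDerivAt (barrier Λ) (-((2 * Λ + 2) * (barrier Λ u - 1))) u := by
  refine ((((hasDerivAt_id u).const_sub (2 * Λ + 2)).const_mul (2 * Λ + 2)).exp.const_add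
    1).congr_deriv ?_
  simp only [barrier, id]
  ring

theorem antitone_barrier (hΛ : 0 ≤ Λ) : Antitone (barrier Λ) := fun u v huv ↦ by
  unfold barrier
  gcongr

-- In terms of `ψ = barrier Λ`, this says `g * ψ u - ψ' u > 1`.
theorem one_lt_mul_barrier_add (hΛ : 0 ≤ Λ) (hg : u / 2 - Λ ≤ g) (hu : 0 ≤ u) :
    1 < g * barrier Λ u + (2 * Λ + 2) * (barrier Λ u - 1) := by
  rcases le_or_gt (2 * Λ + 2) u with hlarge | hsmall
  · have hg1 : 1 ≤ g := by linarith
    have hbarrier : 1 < barrier Λ u := lt_add_of_pos_right 1 (exp_pos _)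
    have hdrag := mul_le_mul_of_nonneg_right hg1 (barrier_pos (Λ := Λ) (u := u)).le
    nlinarith
  · have hgΛ : -Λ ≤ g := by linarith
    have hbarrier : 2 ≤ barrier Λ u := by
      have := one_le_exp (mul_nonneg (by linarith : 0 ≤ 2 * Λ + 2) (sub_nonneg.2 hsmall.le))
      unfold barrier
      linarith
    have hdrag := mul_le_mul_of_nonneg_right hgΛ (barrier_pos (Λ := Λ) (u := u)).le
    nlinarith

end Barrier

/-- A unit-speed profile curve `(x, y)` with tangent angle `θ`, for times in `I`. The
multiplicity `n - 1` of the self-shrinker system is replaced by a real number `m`. -/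
structure ProfileCurveOn (m : ℝ) (x y θ : ℝ → ℝ) (I : Set ℝ) : Prop where
  x_pos : ∀ t ∈ I, 0 < x t
  y_pos : ∀ t ∈ I, 0 < y t
  hasDerivAt_x : ∀ t ∈ I, HasDerivAt x (cos (θ t)) t
  hasDerivAt_y : ∀ t ∈ I, HasDerivAt y (sin (θ t)) t
  hasDerivAt_θ : ∀ t ∈ I, HasDerivAt θ
    ((x t / 2 - m / x t) * sin (θ t) + (m / y t - y t / 2) * cos (θ t)) t

/-- A profile curve in the rotated coordinates `r = (x + y) / √2`, `s = (x - y) / √2`,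
`b = θ + 3π/4`. The condition `|s| < r` encodes `x, y > 0`. -/
structure RotatedProfileCurveOn (m : ℝ) (r s b : ℝ → ℝ) (I : Set ℝ) : Prop where
  abs_lt : ∀ t ∈ I, |s t| < r t
  hasDerivAt_r : ∀ t ∈ I, HasDerivAt r (-cos (b t)) t
  hasDerivAt_s : ∀ t ∈ I, HasDerivAt s (sin (b t)) t
  hasDerivAt_b : ∀ t ∈ I, HasDerivAt b
    (-(damping m (r t) (s t) * sin (b t) + stiffness m (r t) (s t) * s t * cos (b t))) t

theorem ProfileCurveOn.mono {m : ℝ} {x y θ : ℝ → ℝ} {I J : Set ℝ} (h : ProfileCurveOn m x y θ I)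
    (hJ : J ⊆ I) : ProfileCurveOn m x y θ J where
  x_pos t ht := h.x_pos t (hJ ht)
  y_pos t ht := h.y_pos t (hJ ht)
  hasDerivAt_x t ht := h.hasDerivAt_x t (hJ ht)
  hasDerivAt_y t ht := h.hasDerivAt_y t (hJ ht)
  hasDerivAt_θ t ht := h.hasDerivAt_θ t (hJ ht)

theorem cos_eq_rotated (a : ℝ) :
    cos a = (sin (a + 3 * π / 4) - cos (a + 3 * π / 4)) / √2 := by
  rw [show a + 3 * π / 4 = a - π / 4 + π by ring, sin_add_pi, cos_add_pi, sin_sub, cos_sub,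
    cos_pi_div_four, sin_pi_div_four]
  field_simp
  ring

theorem sin_eq_rotated (a : ℝ) :
    sin a = -(sin (a + 3 * π / 4) + cos (a + 3 * π / 4)) / √2 := by
  rw [show a + 3 * π / 4 = a - π / 4 + π by ring, sin_add_pi, cos_add_pi, sin_sub, cos_sub,
    cos_pi_div_four, sin_pi_div_four]
  field_simp
  ring

theorem ProfileCurveOn.rotated {m : ℝ} {x y θ : ℝ → ℝ} {I : Set ℝ} (h : ProfileCurveOn m x y θ I) :
    RotatedProfileCurveOn m (fun t ↦ (x t + y t) / √2) (fun t ↦ (x t - y t) / √2)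
      (fun t ↦ θ t + 3 * π / 4) I where
  abs_lt t ht := by
    have hx := h.x_pos t ht
    have hy := h.y_pos t ht
    rw [abs_div, abs_of_pos (sqrt_pos.2 zero_lt_two)]
    exact div_lt_div_of_pos_right (abs_lt.2 ⟨by linarith, by linarith⟩) (sqrt_pos.2 zero_lt_two)
  hasDerivAt_r t ht := by
    refine (((h.hasDerivAt_x t ht).add (h.hasDerivAt_y t ht)).div_const √2).congr_deriv ?_
    rw [cos_eq_rotated (θ t), sin_eq_rotated (θ t)]
    field_simp
    rw [sq_sqrt zero_le_two]
    ring
  hasDerivAt_s t ht := by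
    refine (((h.hasDerivAt_x t ht).sub (h.hasDerivAt_y t ht)).div_const √2).congr_deriv ?_
    rw [cos_eq_rotated (θ t), sin_eq_rotated (θ t)]
    field_simp
    rw [sq_sqrt zero_le_two]
    ring
  hasDerivAt_b t ht := by
    have hx := h.x_pos t ht
    have hy := h.y_pos t ht
    have hD : ((x t + y t) / √2) ^ 2 - ((x t - y t) / √2) ^ 2 = 2 * (x t * y t) := by
      rw [div_pow, div_pow, sq_sqrt zero_le_two]
      ring
    refine ((h.hasDerivAt_θ t ht).add_const (3 * π / 4)).congr_deriv ?_
    rw [damping, stiffness, hD, cos_eq_rotated (θ t), sin_eq_rotated (θ t)]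
    field_simp
    ring

namespace RotatedProfileCurveOn

variable {m a c κ : ℝ} {r s b : ℝ → ℝ}

theorem mono {I J : Set ℝ} (h : RotatedProfileCurveOn m r s b I) (hJ : J ⊆ I) :
    RotatedProfileCurveOn m r s b J where
  abs_lt t ht := h.abs_lt t (hJ ht)
  hasDerivAt_r t ht := h.hasDerivAt_r t (hJ ht)
  hasDerivAt_s t ht := h.hasDerivAt_s t (hJ ht)
  hasDerivAt_b t ht := h.hasDerivAt_b t (hJ ht)

theorem sub_le_r (h : RotatedProfileCurveOn m r s b (Icc a c)) {t : ℝ} (ht : t ∈ Icc a c) :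
    r a - (t - a) ≤ r t := by
  have hmono : MonotoneOn (fun u ↦ r u + u) (Icc a c) :=
    monotoneOn_of_hasDerivAt_nonneg (convex_Icc a c)
      (fun u hu ↦ (h.hasDerivAt_r u hu).add (hasDerivAt_id u))
      (fun u _ ↦ by linarith [cos_le_one (b u)])
  have : r a + a ≤ r t + t := hmono (left_mem_Icc.2 (ht.1.trans ht.2)) ht ht.1
  linarith

theorem s_le_add (h : RotatedProfileCurveOn m r s b (Icc a c)) {t : ℝ} (ht : t ∈ Icc a c) :
    s t ≤ s a + (t - a) := by
  have hanti : AntitoneOn (fun u ↦ s u - u) (Icc a c) :=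
    antitoneOn_of_hasDerivAt_nonpos (convex_Icc a c)
      (fun u hu ↦ (h.hasDerivAt_s u hu).sub (hasDerivAt_id u))
      (fun u _ ↦ by linarith [sin_le_one (b u)])
  have : s t - t ≤ s a - a := hanti (left_mem_Icc.2 (ht.1.trans ht.2)) ht ht.1
  linarith

/-! ### Turning towards the diagonal -/

theorem b_le_pi_div_two (h : RotatedProfileCurveOn m r s b (Icc a c)) (hba : b a ≤ π / 2)
    (hdamping : ∀ t ∈ Icc a c, 0 < damping m (r t) (s t)) : ∀ t ∈ Icc a c, b t ≤ π / 2 := by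
  intro t ht
  refine sub_nonpos.1 (nonpos_of_hasDerivAt_neg_of_eq_zero (f := fun u ↦ b u - π / 2)
    (fun u hu ↦ (h.hasDerivAt_b u hu).sub_const _) (sub_nonpos.2 hba) (fun u hu hu0 ↦ ?_) t ht)
  simpa [sub_eq_zero.1 hu0] using hdamping u hu

theorem antitoneOn_b_add_mul_s (h : RotatedProfileCurveOn m r s b (Icc a c)) (hm : 0 ≤ m)
    (hs : ∀ t ∈ Icc a c, 0 ≤ s t) (hb : ∀ t ∈ Icc a c, b t ∈ Icc 0 (π / 2))
    (hdamping : ∀ t ∈ Icc a c, κ ≤ damping m (r t) (s t)) :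
    AntitoneOn (fun t ↦ b t + κ * s t) (Icc a c) := by
  refine antitoneOn_of_hasDerivAt_nonpos (convex_Icc a c)
    (fun t ht ↦ (h.hasDerivAt_b t ht).add ((h.hasDerivAt_s t ht).const_mul κ)) fun t ht ↦ ?_
  have hsin : 0 ≤ sin (b t) :=
    sin_nonneg_of_nonneg_of_le_pi (hb t ht).1 (by linarith [(hb t ht).2, pi_pos])
  have hcos : 0 ≤ cos (b t) :=
    cos_nonneg_of_neg_pi_div_two_le_of_le (by linarith [(hb t ht).1, pi_pos]) (hb t ht).2
  have hdrag := mul_le_mul_of_nonneg_right (hdamping t ht) hsin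
  have hstiff : 0 ≤ stiffness m (r t) (s t) * s t * cos (b t) :=
    mul_nonneg (mul_nonneg (by linarith [half_le_stiffness hm (h.abs_lt t ht)]) (hs t ht)) hcos
  linarith

theorem antitoneOn_b (h : RotatedProfileCurveOn m r s b (Icc a c)) (hm : 0 ≤ m)
    (hs : ∀ t ∈ Icc a c, 0 ≤ s t) (hb : ∀ t ∈ Icc a c, b t ∈ Icc 0 (π / 2))
    (hdamping : ∀ t ∈ Icc a c, 0 ≤ damping m (r t) (s t)) : AntitoneOn b (Icc a c) := by
  simpa using h.antitoneOn_b_add_mul_s hm hs hb hdamping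

theorem mul_s_le_pi_div_two (h : RotatedProfileCurveOn m r s b (Icc a c)) (hm : 0 ≤ m)
    (hsa : s a = 0) (hs : ∀ t ∈ Icc a c, 0 ≤ s t) (hb : ∀ t ∈ Icc a c, b t ∈ Icc 0 (π / 2))
    (hdamping : ∀ t ∈ Icc a c, κ ≤ damping m (r t) (s t)) {t : ℝ} (ht : t ∈ Icc a c) :
    κ * s t ≤ π / 2 := by
  have ha : a ∈ Icc a c := left_mem_Icc.2 (ht.1.trans ht.2)
  have : b t + κ * s t ≤ b a + κ * s a := h.antitoneOn_b_add_mul_s hm hs hb hdamping ha ht ht.1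
  rw [hsa, mul_zero] at this
  linarith [(hb t ht).1, (hb a ha).2]

theorem sin_b_mul_le_s (h : RotatedProfileCurveOn m r s b (Icc a c)) (hac : a ≤ c)
    (hb : ∀ t ∈ Icc a c, b t ∈ Icc 0 (π / 2)) (hanti : AntitoneOn b (Icc a c)) (hsa : 0 ≤ s a) :
    sin (b c) * (c - a) ≤ s c := by
  have hc : c ∈ Icc a c := right_mem_Icc.2 hac
  have hmono : MonotoneOn (fun t ↦ s t - sin (b c) * t) (Icc a c) :=
    monotoneOn_of_hasDerivAt_nonneg (convex_Icc a c)
      (fun t ht ↦ (h.hasDerivAt_s t ht).sub ((hasDerivAt_id t).const_mul _))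
      (fun t ht ↦ by
        have := sin_le_sin_of_le_of_le_pi_div_two (by linarith [(hb c hc).1, pi_pos]) (hb t ht).2
          (hanti ht hc ht.2)
        linarith)
  have : s a - sin (b c) * a ≤ s c - sin (b c) * c := hmono (left_mem_Icc.2 hac) hc hac
  linarith

-- This is the decrease of `sin b / s` at rate at least `1 / 4`, cleared of denominators.
theorem antitoneOn_sin_b_sub_mul_s (h : RotatedProfileCurveOn m r s b (Icc a c)) (hm : 0 ≤ m)
    (hs : ∀ t ∈ Icc a c, 0 ≤ s t) (hb : ∀ t ∈ Icc a c, b t ∈ Icc 0 (π / 2))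
    (hsin_le : ∀ t ∈ Icc a c, sin (b t) ≤ 1 / 2)
    (hdamping : ∀ t ∈ Icc a c, 0 ≤ damping m (r t) (s t)) :
    AntitoneOn (fun t ↦ sin (b t) - (c - t) / 4 * s t) (Icc a c) := by
  refine antitoneOn_of_hasDerivAt_nonpos (convex_Icc a c) (fun t ht ↦ (h.hasDerivAt_b t ht).sin.sub
    ((((hasDerivAt_id t).const_sub c).div_const 4).mul (h.hasDerivAt_s t ht))) fun t ht ↦ ?_
  have hsin : 0 ≤ sin (b t) :=
    sin_nonneg_of_nonneg_of_le_pi (hb t ht).1 (by linarith [(hb t ht).2, pi_pos])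
  have hcos : 0 ≤ cos (b t) :=
    cos_nonneg_of_neg_pi_div_two_le_of_le (by linarith [(hb t ht).1, pi_pos]) (hb t ht).2
  have hcos_sq : 1 / 2 ≤ cos (b t) ^ 2 := by
    nlinarith [sin_sq_add_cos_sq (b t), hsin_le t ht]
  have hdrag : 0 ≤ damping m (r t) (s t) * sin (b t) * cos (b t) :=
    mul_nonneg (mul_nonneg (hdamping t ht) hsin) hcos
  have hst := hs t ht
  have hstiff := half_le_stiffness hm (h.abs_lt t ht)
  have hrestore : s t / 4 ≤ stiffness m (r t) (s t) * s t * cos (b t) ^ 2 :=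
    calc s t / 4 = 1 / 2 * s t * (1 / 2) := by ring
      _ ≤ stiffness m (r t) (s t) * s t * cos (b t) ^ 2 := by gcongr
  have htime : 0 ≤ (c - t) / 4 * sin (b t) := mul_nonneg (by linarith [ht.2]) hsin
  simp only [id]
  linarith

theorem b_five_nonpos (h : RotatedProfileCurveOn m r s b (Icc 0 5)) (hm : 0 ≤ m) (hs0 : s 0 = 0)
    (hs : ∀ t ∈ Icc 0 5, 0 ≤ s t) (hb : ∀ t ∈ Icc 0 5, b t ∈ Icc 0 (π / 2))
    (hdamping : ∀ t ∈ Icc 0 5, π ≤ damping m (r t) (s t)) : b 5 ≤ 0 := by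
  have h01 : Icc (0 : ℝ) 1 ⊆ Icc 0 5 := Icc_subset_Icc_right (by norm_num)
  have h15 : Icc (1 : ℝ) 5 ⊆ Icc 0 5 := Icc_subset_Icc_left zero_le_one
  have mem1 : (1 : ℝ) ∈ Icc (0 : ℝ) 5 := by norm_num
  have hdamping0 : ∀ t ∈ Icc 0 5, 0 ≤ damping m (r t) (s t) := fun t ht ↦
    pi_pos.le.trans (hdamping t ht)
  have hanti := h.antitoneOn_b hm hs hb hdamping0
  have hsin1 : sin (b 1) ≤ s 1 := by
    simpa using (h.mono h01).sin_b_mul_le_s zero_le_one (fun t ht ↦ hb t (h01 ht))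
      (hanti.mono h01) hs0.ge
  have hs1 : s 1 ≤ 1 / 2 := by
    have := h.mul_s_le_pi_div_two hm hs0 hs hb hdamping mem1
    nlinarith [pi_pos]
  have hsin_le : ∀ t ∈ Icc 1 5, sin (b t) ≤ 1 / 2 := fun t ht ↦
    (sin_le_sin_of_le_of_le_pi_div_two (by linarith [(hb t (h15 ht)).1, pi_pos]) (hb 1 mem1).2
      (hanti mem1 (h15 ht) ht.1)).trans (hsin1.trans hs1)
  have hsin5 : sin (b 5) ≤ 0 := by
    have := (h.mono h15).antitoneOn_sin_b_sub_mul_s hm (fun t ht ↦ hs t (h15 ht))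
      (fun t ht ↦ hb t (h15 ht)) hsin_le (fun t ht ↦ hdamping0 t (h15 ht))
      (left_mem_Icc.2 (by norm_num)) (right_mem_Icc.2 (by norm_num)) (by norm_num : (1 : ℝ) ≤ 5)
    norm_num at this
    linarith
  by_contra! hpos
  have hb5 := (hb 5 (by norm_num)).2
  exact hsin5.not_gt (sin_pos_of_pos_of_lt_pi hpos (by linarith [pi_pos]))

theorem exists_b_eq_zero (h : RotatedProfileCurveOn m r s b (Icc 0 5)) (hm : 0 ≤ m)
    (hs0 : s 0 = 0) (hb0 : b 0 = π / 2) (hs : ∀ t ∈ Icc 0 5, 0 ≤ s t) (hκ : π ≤ κ)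
    (hdamping : ∀ t ∈ Icc 0 5, κ ≤ damping m (r t) (s t)) :
    ∃ a ∈ Icc 0 5, b a = 0 ∧ κ * s a ≤ π / 2 := by
  have hb_le := h.b_le_pi_div_two hb0.le fun t ht ↦
    (pi_pos.trans_le hκ).trans_le (hdamping t ht)
  have hexists : ∃ c ∈ Icc (0 : ℝ) 5, b c ≤ 0 := by
    by_contra! hpos
    refine (hpos 5 (by norm_num)).not_ge (h.b_five_nonpos hm hs0 hs
      (fun t ht ↦ ⟨(hpos t ht).le, hb_le t ht⟩) fun t ht ↦ hκ.trans (hdamping t ht))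
  obtain ⟨c, hc, hbc⟩ := hexists
  obtain ⟨a, ha, hba, hnonneg⟩ := exists_first_zero hc.1
    ((HasDerivAt.continuousOn h.hasDerivAt_b).mono (Icc_subset_Icc_right hc.2))
    (hb0 ▸ pi_div_two_pos.le) hbc
  have ha5 : a ≤ 5 := ha.2.trans hc.2
  have hsub : Icc 0 a ⊆ Icc 0 5 := Icc_subset_Icc_right ha5
  exact ⟨a, ⟨ha.1, ha5⟩, hba, (h.mono hsub).mul_s_le_pi_div_two hm hs0 (fun t ht ↦ hs t (hsub ht))
    (fun t ht ↦ ⟨hnonneg t ht, hb_le t (hsub ht)⟩) (fun t ht ↦ hdamping t (hsub ht))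
    (right_mem_Icc.2 ha.1)⟩

theorem eighth_le_damping (h : RotatedProfileCurveOn m r s b (Icc 0 5)) (hm : 0 ≤ m)
    (hs0 : s 0 = 0) (hs : ∀ t ∈ Icc 0 5, 0 ≤ s t) (hr0 : 100 + 64 * m ≤ r 0) :
    ∀ t ∈ Icc 0 5, r 0 / 8 ≤ damping m (r t) (s t) := by
  intro t ht
  have hr : r 0 / 2 ≤ r t := by linarith [h.sub_le_r ht, ht.2]
  have hs5 : s t ≤ 5 := by linarith [h.s_le_add ht, ht.2]
  have hdiv : 4 * m / r t ≤ r t / 4 := by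
    rw [div_le_iff₀ (by linarith)]
    nlinarith
  have hs2 : 2 * s t ^ 2 ≤ r t ^ 2 := by nlinarith [hs t ht]
  have := le_damping hm (by linarith) hs2
  linarith

/-! ### Staying close to the diagonal -/

theorem b_nonpos (h : RotatedProfileCurveOn m r s b (Icc a c)) (hm : 0 ≤ m) (hba : b a ≤ 0)
    (hs : ∀ t ∈ Icc a c, 0 < s t) : ∀ t ∈ Icc a c, b t ≤ 0 := by
  refine nonpos_of_hasDerivAt_neg_of_eq_zero h.hasDerivAt_b hba fun t ht ht0 ↦ ?_
  have : 0 < stiffness m (r t) (s t) * s t :=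
    mul_pos (by linarith [half_le_stiffness hm (h.abs_lt t ht)]) (hs t ht)
  simpa [ht0] using this

theorem antitoneOn_s (h : RotatedProfileCurveOn m r s b (Icc a c))
    (hb : ∀ t ∈ Icc a c, b t ∈ Ioc (-(π / 2)) 0) : AntitoneOn s (Icc a c) :=
  antitoneOn_of_hasDerivAt_nonpos (convex_Icc a c) h.hasDerivAt_s fun t ht ↦
    sin_nonpos_of_nonpos_of_neg_pi_le (hb t ht).2 (by linarith [(hb t ht).1, pi_pos])

theorem antitoneOn_r (h : RotatedProfileCurveOn m r s b (Icc a c))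
    (hb : ∀ t ∈ Icc a c, b t ∈ Ioc (-(π / 2)) 0) : AntitoneOn r (Icc a c) :=
  antitoneOn_of_hasDerivAt_nonpos (convex_Icc a c) h.hasDerivAt_r fun t ht ↦
    neg_nonpos.2 (cos_nonneg_of_neg_pi_div_two_le_of_le (hb t ht).1.le
      ((hb t ht).2.trans pi_div_two_pos.le))

theorem neg_sin_b_le (h : RotatedProfileCurveOn m r s b (Icc a c)) {S N Λ : ℝ} (hS : 0 < S)
    (hN : 0 < N) (hΛ : 0 ≤ Λ) (hba : b a = 0) (hb : ∀ t ∈ Icc a c, b t ∈ Ioc (-(π / 2)) 0)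
    (hs : ∀ t ∈ Icc a c, s t ∈ Icc 0 S) (hstiff : ∀ t ∈ Icc a c, stiffness m (r t) (s t) ≤ N)
    (hdamping : ∀ t ∈ Icc a c, r t / 2 - Λ ≤ damping m (r t) (s t)) :
    ∀ t ∈ Icc a c, -sin (b t) ≤ S * (N * barrier Λ 0) := by
  have hr : ∀ t ∈ Icc a c, 0 ≤ r t := fun t ht ↦ (abs_nonneg _).trans (h.abs_lt t ht).le
  have hbarrier : ∀ t ∈ Icc a c, -sin (b t) - S * (N * barrier Λ (r t)) ≤ 0 := by
    refine nonpos_of_hasDerivAt_neg_of_eq_zero (fun t ht ↦ (h.hasDerivAt_b t ht).sin.neg.sub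
      (((hasDerivAt_barrier.comp t (h.hasDerivAt_r t ht)).const_mul N).const_mul S)) ?_
      fun t ht ht0 ↦ ?_
    · have := mul_pos hS (mul_pos hN (barrier_pos (Λ := Λ) (u := r a)))
      simpa [hba] using this.le
    have hcos : 0 < cos (b t) :=
      cos_pos_of_mem_Ioo ⟨(hb t ht).1, (hb t ht).2.trans_lt pi_div_two_pos⟩
    have hst := (hs t ht).1
    have hforce : stiffness m (r t) (s t) * s t * cos (b t) ≤ N * S :=
      calc stiffness m (r t) (s t) * s t * cos (b t) ≤ N * S * 1 := by
            gcongr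
            exacts [hstiff t ht, (hs t ht).2, cos_le_one _]
        _ = N * S := mul_one _
    have hsuper := mul_lt_mul_of_pos_left (one_lt_mul_barrier_add hΛ (hdamping t ht) (hr t ht))
      (mul_pos hN hS)
    rw [mul_one] at hsuper
    have hcross := mul_lt_mul_of_pos_right (hforce.trans_lt hsuper) hcos
    have hsin : sin (b t) = -(S * (N * barrier Λ (r t))) := by linarith
    rw [hsin]
    linarith
  intro t ht
  calc -sin (b t) ≤ S * (N * barrier Λ (r t)) := sub_nonpos.1 (hbarrier t ht)
    _ ≤ S * (N * barrier Λ 0) := by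
      gcongr
      exact antitone_barrier hΛ (hr t ht)

theorem abs_b_le (h : RotatedProfileCurveOn m r s b (Icc a c)) (hac : a ≤ c) (hm : 0 ≤ m)
    {k S : ℝ} (hk : 0 < k) (hS : 0 < S) (hSk : 2 * S ≤ k) (hkr : k ≤ r c) (hba : b a = 0)
    (hb : ∀ t ∈ Icc a c, b t ∈ Ioc (-(π / 2)) 0) (hs : ∀ t ∈ Icc a c, s t ∈ Icc 0 S) :
    |b c| ≤ 2 * (S * angleConst m k) := by
  have hc : c ∈ Icc a c := right_mem_Icc.2 hac
  have hr : ∀ t ∈ Icc a c, k ≤ r t := fun t ht ↦ hkr.trans (h.antitoneOn_r hb ht hc ht.2)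
  have hsr : ∀ t ∈ Icc a c, 2 * s t ^ 2 ≤ r t ^ 2 := fun t ht ↦ by
    nlinarith [hr t ht, (hs t ht).1, (hs t ht).2]
  have hstiff : ∀ t ∈ Icc a c, stiffness m (r t) (s t) ≤ 1 / 2 + 4 * m / k ^ 2 := fun t ht ↦ by
    have hrt := hr t ht
    refine (stiffness_le hm (hk.trans_le hrt) (hsr t ht)).trans ?_
    gcongr
  have hdamping : ∀ t ∈ Icc a c, r t / 2 - 4 * m / k ≤ damping m (r t) (s t) := fun t ht ↦ by
    have hrt := hr t ht
    refine le_trans ?_ (le_damping hm (hk.trans_le hrt) (hsr t ht))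
    gcongr
  have hsin : -sin (b c) ≤ S * angleConst m k :=
    h.neg_sin_b_le hS (by positivity) (by positivity) hba hb hs hstiff hdamping c hc
  have hjordan := mul_le_sin (neg_nonneg.2 (hb c hc).2) (neg_le.1 (hb c hc).1.le)
  rw [sin_neg] at hjordan
  have hpi : 1 / 2 ≤ 2 / π := by
    rw [div_le_div_iff₀ two_pos pi_pos]
    linarith [pi_le_four]
  rw [abs_of_nonpos (hb c hc).2]
  nlinarith [(hb c hc).2]

theorem s_le_and_abs_b_le (h : RotatedProfileCurveOn m r s b (Icc 0 c)) (hc : 0 ≤ c) (hm : 0 ≤ m)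
    {k R : ℝ} (hk : 0 < k) (hR : 100 + 64 * m ≤ R) (hRk : 4 * π / R ≤ k / 2) (hkr : k ≤ r c)
    (hrR : r c + 5 ≤ R) (hr0 : r 0 = R) (hs0 : s 0 = 0) (hb0 : b 0 = π / 2)
    (hs : ∀ t ∈ Ioc 0 c, 0 < s t) (hb : ∀ t ∈ Icc 0 c, -(π / 2) < b t) :
    s c ≤ 4 * π / R ∧ |b c| ≤ 2 * (4 * π / R * angleConst m k) := by
  have hRpos : 0 < R := by linarith
  have hc5 : 5 ≤ c := by linarith [h.sub_le_r (right_mem_Icc.2 hc)]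
  have h05 : Icc (0 : ℝ) 5 ⊆ Icc 0 c := Icc_subset_Icc_right hc5
  have hs_nonneg : ∀ t ∈ Icc 0 5, 0 ≤ s t := fun t ht ↦
    ht.1.eq_or_lt.elim (fun h0 ↦ h0 ▸ hs0.ge) fun h0 ↦ (hs t ⟨h0, (h05 ht).2⟩).le
  obtain ⟨a, ha, hba, hsa⟩ := (h.mono h05).exists_b_eq_zero hm hs0 hb0 hs_nonneg
    (by linarith [pi_le_four]) ((h.mono h05).eighth_le_damping hm hs0 hs_nonneg (hr0 ▸ hR))
  have hac : a ≤ c := ha.2.trans hc5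
  have ha0 : 0 < a := ha.1.lt_of_ne fun h0 ↦ by
    rw [← h0, hb0] at hba
    exact pi_div_two_pos.ne' hba
  have hsub : Icc a c ⊆ Icc 0 c := Icc_subset_Icc_left ha.1
  have hs_pos : ∀ t ∈ Icc a c, 0 < s t := fun t ht ↦ hs t ⟨ha0.trans_le ht.1, ht.2⟩
  have hac' := h.mono hsub
  have hb' : ∀ t ∈ Icc a c, b t ∈ Ioc (-(π / 2)) 0 := fun t ht ↦
    ⟨hb t (hsub ht), hac'.b_nonpos hm hba.le hs_pos t ht⟩
  have hs_le : ∀ t ∈ Icc a c, s t ≤ 4 * π / R := fun t ht ↦ by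
    refine (hac'.antitoneOn_s hb' (left_mem_Icc.2 hac) ht ht.1).trans ?_
    rw [le_div_iff₀ hRpos]
    rw [hr0] at hsa
    linarith
  exact ⟨hs_le c (right_mem_Icc.2 hac), hac'.abs_b_le hac hm hk (by positivity) (by linarith) hkr
    hba hb' fun t ht ↦ ⟨(hs_pos t ht).le, hs_le t ht⟩⟩

end RotatedProfileCurveOn

theorem c1_convergence_to_diagonal_general (m : ℝ) (hm : 0 ≤ m) (k₁ k₂ : ℝ) (hk₁ : 0 < k₁)
    (ε : ℝ) (hε : 0 < ε) :
    ∃ R₀ > (0 : ℝ), ∀ R ≥ R₀, ∀ t ≥ (0 : ℝ), ∀ x y θ : ℝ → ℝ,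
      ProfileCurveOn m x y θ (Icc 0 t) →
      x 0 = R / √2 → y 0 = R / √2 → θ 0 = -(π / 4) →
      (∀ τ ∈ Ioc 0 t, y τ < x τ) →
      (∀ τ ∈ Icc 0 t, -(5 * π / 4) < θ τ) →
      (x t + y t) / √2 ∈ Icc k₁ k₂ →
      (x t - y t) / √2 < ε ∧ |θ t + 3 * π / 4| < ε := by
  have hdecay : Tendsto (fun R : ℝ ↦ 4 * π / R) atTop (nhds 0) := tendsto_id.const_div_atTop _
  have hangle : Tendsto (fun R : ℝ ↦ 2 * (4 * π / R * angleConst m k₁)) atTop (nhds 0) := by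
    simpa using (hdecay.mul_const (angleConst m k₁)).const_mul 2
  obtain ⟨R₀, hR₀⟩ := eventually_atTop.1 (((hdecay.eventually_le_const (half_pos hk₁)).and
    (hdecay.eventually_lt_const hε)).and (hangle.eventually_lt_const hε))
  have hsqrt : 0 < √(2 : ℝ) := sqrt_pos.2 two_pos
  refine ⟨max R₀ (max (100 + 64 * m) (k₂ + 5)), by positivity,
    fun R hR t ht x y θ h hx0 hy0 hθ0 hyx hθ hmem ↦ ?_⟩
  simp only [ge_iff_le, max_le_iff] at hR
  obtain ⟨⟨hk, hs⟩, hb⟩ := hR₀ R hR.1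
  have hbound := h.rotated.s_le_and_abs_b_le ht hm hk₁ hR.2.1 hk hmem.1
    (by linarith [hmem.2, hR.2.2])
    (by
      rw [hx0, hy0]
      field_simp
      rw [sq_sqrt zero_le_two]
      ring)
    (by simp [hx0, hy0])
    (by
      rw [hθ0]
      ring)
    (fun τ hτ ↦ div_pos (sub_pos.2 (hyx τ hτ)) hsqrt)
    (fun τ hτ ↦ by linarith [hθ τ hτ])
  exact ⟨hbound.1.trans_lt hs, hbound.2.trans_lt hb⟩

theorem ShootingSol.profileCurveOn {n : ℕ} {R T : ℝ} {x y θ : ℝ → ℝ}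
    (h : ShootingSol n R T x y θ) : ProfileCurveOn (n - 1) x y θ (Ico 0 T) := by
  obtain ⟨-, -, -, -, hsys⟩ := h
  exact ⟨fun t ht ↦ (hsys t ht).1, fun t ht ↦ (hsys t ht).2.1, fun t ht ↦ (hsys t ht).2.2.1,
    fun t ht ↦ (hsys t ht).2.2.2.1, fun t ht ↦ (hsys t ht).2.2.2.2⟩

/-- C¹ convergence to the diagonal: for every compact interval
`[k₁, k₂] ⊂ (0, ∞)` and every `ε > 0` there is `R₀ > 0` such that for all `R ≥ R₀`, at
any time `t` at which the shooting curve has stayed strictly below the diagonal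
(`x > y` on `(0, t]`) with total turning less than `π` (`θ > −5π/4` on `[0, t]`), if the
distance `(x + y)/√2` from the origin along the diagonal lies in `[k₁, k₂]`, then the
distance `(x − y)/√2` below the diagonal is less than `ε` and `|θ + 3π/4| < ε`. -/
theorem c1_convergence_to_diagonal (n : ℕ) (hn : 2 ≤ n) :
    ∀ k₁ k₂ : ℝ, 0 < k₁ → k₁ ≤ k₂ → ∀ ε > (0 : ℝ),
      ∃ R₀ > (0 : ℝ), ∀ R ≥ R₀, ∀ (T : ℝ) (x y θ : ℝ → ℝ),
        ShootingSol n R T x y θ →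
        ∀ t ∈ Set.Ioo 0 T,
          (∀ τ ∈ Set.Ioc 0 t, y τ < x τ) →
          (∀ τ ∈ Set.Icc 0 t, -(5 * Real.pi / 4) < θ τ) →
          (x t + y t) / Real.sqrt 2 ∈ Set.Icc k₁ k₂ →
          (x t - y t) / Real.sqrt 2 < ε ∧ |θ t + 3 * Real.pi / 4| < ε := by
  intro k₁ k₂ hk₁ _ ε hε
  have hm : (0 : ℝ) ≤ n - 1 := sub_nonneg.2 (Nat.one_le_cast.2 (one_le_two.trans hn))
  obtain ⟨R₀, hR₀, H⟩ := c1_convergence_to_diagonal_general (n - 1) hm k₁ k₂ hk₁ ε hε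
  exact ⟨R₀, hR₀, fun R hR T x y θ h t ht ↦ H R hR t ht.1.le x y θ
    (h.profileCurveOn.mono (Icc_subset_Ico_right ht.2)) h.2.1 h.2.2.1 h.2.2.2.1⟩
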